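/- Let S ⊆ [n]² be admissible, Ā ∈ M_S and b̄ ∈ ℝⁿ with ‖Ā‖_max ≤ 1 and ‖b̄‖_∞ ≤ 1, σ > 0, and let A ~ N_S(Ā, σ²Id) and b ~ N(b̄, σ²Id) be independent. Then for every β > 1, E( log_β(c(A,b)) ) ≤ log_β((1 + σ)/σ) + 2·log_β|S| + log_β n + 2.65/ln β, where c(A,b) = max_{k ∈ [n]} c_k(A,b) and c_k(A,b) is the componentwise condition number of the map (A,b) ↦ (A⁻¹b)_k at (A,b) (A is almost surely invertible). -/

import Mathlib

open MeasureTheory ProbabilityTheory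
open scoped ENNReal

/-- Componentwise "distance" `d(u,v) = ‖(u−v)/v‖_∞`, valued in `[0,∞]`:
the `i`-th component of the quotient is `|u i − v i|/|v i|` if `v i ≠ 0`,
`0` if `u i = v i = 0`, and `∞` otherwise. -/
noncomputable def cwDist {ι : Type*} (u v : ι → ℝ) : ℝ≥0∞ :=
  ⨆ i, if v i ≠ 0 then ENNReal.ofReal (|u i - v i| / |v i|)
       else if u i = v i then 0 else ⊤

/-- Componentwise condition number of `F : D ⊆ ℝ^ι → ℝ^κ` at `a`:
`c^F(a) = lim_{δ→0} sup { d(F x, F a)/d(x,a) : x ∈ D, d(x,a) ≤ δ, x ≠ a }`,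
the limit being an infimum since the sup is monotone in `δ`. -/
noncomputable def cwCond {ι κ : Type*} (D : Set (ι → ℝ)) (F : (ι → ℝ) → κ → ℝ)
    (a : ι → ℝ) : ℝ≥0∞ :=
  ⨅ δ ∈ Set.Ioi (0 : ℝ≥0∞),
    ⨆ x ∈ {x ∈ D | cwDist x a ≤ δ ∧ x ≠ a}, cwDist (F x) (F a) / cwDist x a

/-- A matrix viewed as a point of `ℝ^(n×n)`. -/
def matToFun {n : ℕ} (A : Matrix (Fin n) (Fin n) ℝ) : Fin n × Fin n → ℝ :=
  fun p => A p.1 p.2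

/-- A point of `ℝ^(n×n)` viewed as a matrix. -/
def funToMat {n : ℕ} (x : Fin n × Fin n → ℝ) : Matrix (Fin n) (Fin n) ℝ :=
  Matrix.of fun i j => x (i, j)

/-- The componentwise condition number `c^det(A)` of determinant computation at `A`. -/
noncomputable def cDet {n : ℕ} (A : Matrix (Fin n) (Fin n) ℝ) : ℝ≥0∞ :=
  cwCond Set.univ (fun x (_ : Unit) => (funToMat x).det) (matToFun A)

/-- The componentwise condition number `c†_{kl}(A)` of the map `A ↦ (A⁻¹)_{kl}` at `A`. -/
noncomputable def cInv {n : ℕ} (k l : Fin n) (A : Matrix (Fin n) (Fin n) ℝ) : ℝ≥0∞ :=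
  cwCond {x | IsUnit (funToMat x).det}
    (fun x (_ : Unit) => (funToMat x)⁻¹ k l) (matToFun A)

/-- `c†(A) = max_{k,l} c†_{kl}(A)`. -/
noncomputable def cInvMax {n : ℕ} (A : Matrix (Fin n) (Fin n) ℝ) : ℝ≥0∞ :=
  ⨆ k, ⨆ l, cInv k l A

/-- A pair (matrix, right-hand side) viewed as a point of `ℝ^(n×n+n)`. -/
def pairToFun {n : ℕ} (A : Matrix (Fin n) (Fin n) ℝ) (b : Fin n → ℝ) :
    (Fin n × Fin n) ⊕ Fin n → ℝ :=
  Sum.elim (fun p => A p.1 p.2) b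

def funToMat' {n : ℕ} (x : (Fin n × Fin n) ⊕ Fin n → ℝ) : Matrix (Fin n) (Fin n) ℝ :=
  Matrix.of fun i j => x (Sum.inl (i, j))

def funToVec {n : ℕ} (x : (Fin n × Fin n) ⊕ Fin n → ℝ) : Fin n → ℝ :=
  fun i => x (Sum.inr i)

/-- The componentwise condition number `c_k(A,b)` of the map `(A,b) ↦ (A⁻¹b)_k` at `(A,b)`. -/
noncomputable def cLin {n : ℕ} (k : Fin n) (A : Matrix (Fin n) (Fin n) ℝ)
    (b : Fin n → ℝ) : ℝ≥0∞ :=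
  cwCond {x | IsUnit (funToMat' x).det}
    (fun x (_ : Unit) => (Matrix.mulVec (funToMat' x)⁻¹ (funToVec x)) k) (pairToFun A b)

/-- `c(A,b) = max_k c_k(A,b)`. -/
noncomputable def cLinMax {n : ℕ} (A : Matrix (Fin n) (Fin n) ℝ) (b : Fin n → ℝ) : ℝ≥0∞ :=
  ⨆ k, cLin k A b

instance matrixMeasurableSpace {n : ℕ} : MeasurableSpace (Matrix (Fin n) (Fin n) ℝ) :=
  inferInstanceAs (MeasurableSpace (Fin n → Fin n → ℝ))

/-- The distribution `N_S(Ā, σ²Id)` of a random sparse matrix: the entries `a_{ij}` with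
`(i,j) ∈ S` are independent Gaussians `N(ā_{ij}, σ²)`, and `a_{ij} = 0` for `(i,j) ∉ S`. -/
noncomputable def sparseGaussian {n : ℕ} (S : Finset (Fin n × Fin n))
    (Abar : Matrix (Fin n) (Fin n) ℝ) (σ : ℝ) : Measure (Matrix (Fin n) (Fin n) ℝ) :=
  (Measure.pi fun p : S => gaussianReal (Abar p.1.1 p.1.2) ⟨σ ^ 2, sq_nonneg σ⟩).map
    fun g => Matrix.of fun i j => if h : (i, j) ∈ S then g ⟨(i, j), h⟩ else 0

/-- The distribution `N(b̄, σ²Id)` on `ℝⁿ`: independent Gaussian entries `N(b̄_i, σ²)`. -/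
noncomputable def vecGaussian {n : ℕ} (bbar : Fin n → ℝ) (σ : ℝ) : Measure (Fin n → ℝ) :=
  Measure.pi fun i => gaussianReal (bbar i) ⟨σ ^ 2, sq_nonneg σ⟩

/-- `S ⊆ [n]²` is admissible when `M_S` contains an invertible matrix. -/
def Admissible {n : ℕ} (S : Finset (Fin n × Fin n)) : Prop :=
  ∃ B : Matrix (Fin n) (Fin n) ℝ, (∀ i j, (i, j) ∉ S → B i j = 0) ∧ IsUnit B.det


lemma aux_abs_mul_exp (z : ℝ) : |z| * Real.exp (-z ^ 2 / 2) ≤ 2 / 3 := by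
  have h1 := Real.quadratic_le_exp_of_nonneg (x := z ^ 2 / 2) (by positivity)
  have h2 : Real.exp (-z ^ 2 / 2) = (Real.exp (z ^ 2 / 2))⁻¹ := by
    rw [← Real.exp_neg]; congr 1; ring
  rw [h2, ← div_eq_mul_inv, div_le_iff₀ (Real.exp_pos _)]
  have h3 : |z| ^ 2 = z ^ 2 := sq_abs z
  have h4 := abs_nonneg z
  rw [← h3] at h1 ⊢
  nlinarith [sq_nonneg (|z| - 1), sq_nonneg (|z| ^ 2 - 1)]

lemma aux_pdf_bound (v : NNReal) (m σ x : ℝ) (hvσ : (v : ℝ) = σ ^ 2) (hm : |m| ≤ 1) (hσ : 0 < σ) :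
    |x| * gaussianPDFReal m v x ≤ 0.4 * ((1 + σ) / σ - 1 / 3) := by
  have hs : Real.sqrt (2 * Real.pi * σ ^ 2) = Real.sqrt (2 * Real.pi) * σ := by
    rw [Real.sqrt_mul (by positivity), Real.sqrt_sq hσ.le]
  have hpi : (2.5 : ℝ) ≤ Real.sqrt (2 * Real.pi) := by
    apply Real.le_sqrt_of_sq_le
    nlinarith [Real.pi_gt_d2]
  have hx : |x| ≤ 1 + σ * |(x - m) / σ| := by
    have : x = m + σ * ((x - m) / σ) := by field_simp; ring
    calc |x| = |m + σ * ((x - m) / σ)| := by rw [← this]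
      _ ≤ |m| + |σ * ((x - m) / σ)| := abs_add_le _ _
      _ ≤ _ := by rw [abs_mul, abs_of_pos hσ]; gcongr
  have he : -(x - m) ^ 2 / (2 * σ ^ 2) = -((x - m) / σ) ^ 2 / 2 := by
    field_simp
  simp only [gaussianPDFReal]
  rw [hvσ, hs, he]
  set z := (x - m) / σ
  have hE1 : Real.exp (-z ^ 2 / 2) ≤ 1 := by
    apply Real.exp_le_one_iff.2; nlinarith [sq_nonneg z]
  have hE := aux_abs_mul_exp z
  have key : |x| * Real.exp (-z ^ 2 / 2) ≤ 1 + σ * (2 / 3) := by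
    calc |x| * Real.exp (-z ^ 2 / 2) ≤ (1 + σ * |z|) * Real.exp (-z ^ 2 / 2) := by gcongr
      _ = Real.exp (-z ^ 2 / 2) + σ * (|z| * Real.exp (-z ^ 2 / 2)) := by ring
      _ ≤ _ := by gcongr
  have hinv : (Real.sqrt (2 * Real.pi) * σ)⁻¹ ≤ 0.4 / σ := by
    rw [mul_inv]
    have : (Real.sqrt (2 * Real.pi))⁻¹ ≤ 0.4 := by
      rw [inv_le_comm₀ (by linarith) (by norm_num)]; norm_num at hpi ⊢; linarith
    rw [div_eq_mul_inv]; gcongr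
  calc |x| * ((Real.sqrt (2 * Real.pi) * σ)⁻¹ * Real.exp (-z ^ 2 / 2))
      = (Real.sqrt (2 * Real.pi) * σ)⁻¹ * (|x| * Real.exp (-z ^ 2 / 2)) := by ring
    _ ≤ 0.4 / σ * (1 + σ * (2 / 3)) := by gcongr
    _ = _ := by field_simp; ring

lemma aux_tail (v : NNReal) (m σ q t : ℝ) (hvσ : (v : ℝ) = σ ^ 2) (hm : |m| ≤ 1) (hσ : 0 < σ) (ht : 3 * ((1 + σ) / σ) ≤ t) :
    gaussianReal m v {a | t < |a / (a - q)|}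
      ≤ ENNReal.ofReal (0.8 * ((1 + σ) / σ) / t) := by
  have hκ : 1 < (1 + σ) / σ := by rw [lt_div_iff₀ hσ]; linarith
  set κ := (1 + σ) / σ with hκd
  have ht1 : 3 < t := by linarith
  have ht2 : 0 < t ^ 2 - 1 := by nlinarith
  have hv : v ≠ 0 := by
    rintro rfl
    simp at hvσ
    exact hσ.ne' (pow_eq_zero_iff (by norm_num) |>.1 hvσ.symm)
  rcases eq_or_ne q 0 with rfl | hq
  · have : {a : ℝ | t < |a / (a - 0)|} = ∅ := by
      ext a
      simp only [sub_zero, Set.mem_ofPred_eq, Set.mem_empty_iff_false, iff_false, not_lt]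
      rcases eq_or_ne a 0 with rfl | ha
      · simp; linarith
      · rw [div_self ha]; simp; linarith
    rw [this]; simp
  have hq' : 0 < |q| := abs_pos.2 hq
  set c := q * t ^ 2 / (t ^ 2 - 1) with hc
  set r := |q| * t / (t ^ 2 - 1) with hr
  have hr0 : 0 < r := by positivity
  have hmem : ∀ a, t < |a / (a - q)| → t * |a - q| < |a| := by
    intro a ha
    rw [abs_div] at ha
    have : 0 < |a - q| := by
      rcases (abs_nonneg (a - q)).eq_or_lt with h | h
      · rw [← h] at ha; simp at ha; linarith
      · exact h
    rwa [lt_div_iff₀ this] at ha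
  set s := {a : ℝ | t * |a - q| < |a|} with hs
  have hsm : MeasurableSet s := by
    apply measurableSet_lt <;> fun_prop
  have hsub : s ⊆ Metric.ball c r := by
    intro a ha
    simp only [hs, Set.mem_ofPred_eq] at ha
    rw [Metric.mem_ball, Real.dist_eq]
    apply abs_lt_of_sq_lt_sq _ hr0.le
    have h2 : t ^ 2 * (a - q) ^ 2 < a ^ 2 := by
      rw [← sq_abs a, ← sq_abs (a - q), ← mul_pow]
      apply pow_lt_pow_left₀ ha (by positivity) (by norm_num)
    have e1 : (a - c) ^ 2 = ((t ^ 2 - 1) * a - q * t ^ 2) ^ 2 / (t ^ 2 - 1) ^ 2 := by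
      rw [hc]; field_simp
    have e2 : r ^ 2 = q ^ 2 * t ^ 2 / (t ^ 2 - 1) ^ 2 := by
      rw [hr, div_pow, mul_pow, sq_abs]
    rw [e1, e2]
    apply div_lt_div_of_pos_right _ (by positivity)
    nlinarith
  have hlow : ∀ a ∈ s, |q| * t / (t + 1) ≤ |a| := by
    intro a ha
    simp only [hs, Set.mem_ofPred_eq] at ha
    rw [div_le_iff₀ (by linarith)]
    have : |q| ≤ |a| + |a - q| := by
      have := abs_sub a (a - q); simpa using this
    nlinarith
  have hpdf : ∀ a ∈ s, gaussianPDF m v a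
      ≤ ENNReal.ofReal (0.4 * (κ - 1 / 3) / (|q| * t / (t + 1))) := by
    intro a ha
    rw [gaussianPDF_def]
    apply ENNReal.ofReal_le_ofReal
    have h1 := aux_pdf_bound v m σ a hvσ hm hσ
    have h2 := hlow a ha
    change gaussianPDFReal m v a ≤ _
    rw [le_div_iff₀ (by positivity)]
    refine le_trans ?_ h1
    rw [mul_comm]
    gcongr
    exact gaussianPDFReal_nonneg _ _ _
  calc gaussianReal m v {a | t < |a / (a - q)|}
      ≤ gaussianReal m v s := measure_mono hmem
    _ = ∫⁻ a in s, gaussianPDF m v a := gaussianReal_apply _ hv _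
    _ ≤ ∫⁻ a in s, ENNReal.ofReal (0.4 * (κ - 1 / 3) / (|q| * t / (t + 1))) :=
        setLIntegral_mono' hsm hpdf
    _ = ENNReal.ofReal (0.4 * (κ - 1 / 3) / (|q| * t / (t + 1))) * volume s := by simp
    _ ≤ ENNReal.ofReal (0.4 * (κ - 1 / 3) / (|q| * t / (t + 1))) * volume (Metric.ball c r) := by
        gcongr
    _ = ENNReal.ofReal (0.4 * (κ - 1 / 3) / (|q| * t / (t + 1)) * (2 * r)) := by
        have : 0 ≤ κ - 1 / 3 := by linarith
        rw [Real.volume_ball, ← ENNReal.ofReal_mul]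
        apply div_nonneg (mul_nonneg (by norm_num) this) (by positivity)
    _ ≤ _ := by
        apply ENNReal.ofReal_le_ofReal
        have : 0.4 * (κ - 1 / 3) / (|q| * t / (t + 1)) * (2 * r) = 0.8 * (κ - 1 / 3) / (t - 1) := by
          rw [hr]
          have : t ^ 2 - 1 = (t - 1) * (t + 1) := by ring
          rw [this]
          have : t - 1 ≠ 0 := by linarith
          field_simp; ring
        rw [this, div_le_div_iff₀ (by linarith) (by linarith)]
        nlinarith

lemma aux_moment (v : NNReal) (m σ q : ℝ) (hvσ : (v : ℝ) = σ ^ 2) (hm : |m| ≤ 1) (hσ : 0 < σ) :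
    ∫⁻ a, ENNReal.ofReal (|a / (a - q)| ^ (2 / 3 : ℝ)) ∂(gaussianReal m v)
      ≤ ENNReal.ofReal (23 / 15 * (3 * ((1 + σ) / σ)) ^ (2 / 3 : ℝ)) := by
  have hκ : 1 < (1 + σ) / σ := by rw [lt_div_iff₀ hσ]; linarith
  set κ := (1 + σ) / σ with hκd
  set T := 3 * κ with hT
  have hT0 : 0 < T := by linarith
  rw [lintegral_rpow_eq_lintegral_meas_lt_mul _ (Filter.Eventually.of_forall fun _ => abs_nonneg _)
    (by fun_prop) (by norm_num)]
  have hsplit : Set.Ioi (0 : ℝ) = Set.Ioc 0 T ∪ Set.Ioi T := (Set.Ioc_union_Ioi_eq_Ioi hT0.le).symm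
  rw [hsplit, lintegral_union measurableSet_Ioi (Set.Ioc_disjoint_Ioi le_rfl)]
  have hA : ∫⁻ t in Set.Ioc 0 T, gaussianReal m v {a | t < |a / (a - q)|} *
      ENNReal.ofReal (t ^ ((2 / 3 : ℝ) - 1)) ≤ ENNReal.ofReal (3 / 2 * T ^ (2 / 3 : ℝ)) := by
    calc _ ≤ ∫⁻ t in Set.Ioc 0 T, ENNReal.ofReal (t ^ ((2 / 3 : ℝ) - 1)) := by
          apply lintegral_mono
          intro t
          exact mul_le_of_le_one_left (by positivity) prob_le_one
      _ = ENNReal.ofReal (∫ t in Set.Ioc 0 T, t ^ ((2 / 3 : ℝ) - 1)) := by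
          rw [ofReal_integral_eq_lintegral_ofReal]
          · have := (intervalIntegral.intervalIntegrable_rpow' (a := 0) (b := T)
              (r := (2 / 3 : ℝ) - 1) (by norm_num))
            exact (intervalIntegrable_iff_integrableOn_Ioc_of_le hT0.le).1 this
          · filter_upwards [ae_restrict_mem measurableSet_Ioc] with t ht
            exact Real.rpow_nonneg ht.1.le _
      _ = _ := by
          rw [← intervalIntegral.integral_of_le hT0.le, integral_rpow (Or.inl (by norm_num))]
          congr 1
          rw [Real.zero_rpow (by norm_num)]
          norm_num
          ring
  have hB : ∫⁻ t in Set.Ioi T, gaussianReal m v {a | t < |a / (a - q)|} *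
      ENNReal.ofReal (t ^ ((2 / 3 : ℝ) - 1)) ≤ ENNReal.ofReal (0.8 * T ^ (2 / 3 : ℝ)) := by
    calc _ ≤ ∫⁻ t in Set.Ioi T, ENNReal.ofReal (0.8 * κ * t ^ (-(4 / 3) : ℝ)) := by
          apply setLIntegral_mono' measurableSet_Ioi
          intro t ht
          have ht0 : 0 < t := lt_trans hT0 ht
          calc _ ≤ ENNReal.ofReal (0.8 * κ / t) * ENNReal.ofReal (t ^ ((2 / 3 : ℝ) - 1)) := by
                gcongr
                exact aux_tail v m σ q t hvσ hm hσ (le_of_lt ht)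
            _ = _ := by
                rw [← ENNReal.ofReal_mul (by positivity)]
                congr 1
                have : t ^ (-(4 / 3) : ℝ) = t ^ ((2 / 3 : ℝ) - 1) / t := by
                  rw [← Real.rpow_sub_one ht0.ne']; norm_num
                rw [this]; ring
      _ = ENNReal.ofReal (∫ t in Set.Ioi T, 0.8 * κ * t ^ (-(4 / 3) : ℝ)) := by
          rw [ofReal_integral_eq_lintegral_ofReal]
          · exact (integrableOn_Ioi_rpow_of_lt (by norm_num) hT0).const_mul _
          · filter_upwards [ae_restrict_mem measurableSet_Ioi] with t ht
            have ht0 : 0 < t := lt_trans hT0 ht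
            positivity
      _ = _ := by
          rw [integral_const_mul, integral_Ioi_rpow_of_lt (by norm_num) hT0]
          congr 1
          have : T ^ (2 / 3 : ℝ) = T * T ^ (-(4 / 3) + 1 : ℝ) := by
            rw [← Real.rpow_one_add' hT0.le (by norm_num)]; norm_num
          rw [this, hT]
          ring
  calc _ ≤ ENNReal.ofReal (2 / 3) * (ENNReal.ofReal (3 / 2 * T ^ (2 / 3 : ℝ)) +
        ENNReal.ofReal (0.8 * T ^ (2 / 3 : ℝ))) := by gcongr
    _ = _ := by
      rw [← ENNReal.ofReal_add (by positivity) (by positivity), ← ENNReal.ofReal_mul (by norm_num)]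
      congr 1; ring

lemma aux_meas_det {Ω : Type*} [MeasurableSpace Ω] {n : ℕ} (M : Ω → Matrix (Fin n) (Fin n) ℝ)
    (h : ∀ i j, Measurable fun ω => M ω i j) : Measurable fun ω => (M ω).det := by
  simp only [Matrix.det_apply]
  refine Finset.measurable_fun_sum _ fun τ _ => ?_
  refine Measurable.const_smul ?_ _
  exact Finset.measurable_fun_prod _ fun i _ => h _ _

lemma aux_meas_inv {Ω : Type*} [MeasurableSpace Ω] {n : ℕ} (M : Ω → Matrix (Fin n) (Fin n) ℝ)
    (h : ∀ i j, Measurable fun ω => M ω i j) (k l : Fin n) :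
    Measurable fun ω => (M ω)⁻¹ k l := by
  simp only [Matrix.inv_def, Matrix.smul_apply, Matrix.adjugate_apply, Ring.inverse_eq_inv']
  refine Measurable.smul (aux_meas_det M h).inv (aux_meas_det _ fun i j => ?_)
  simp only [Matrix.updateRow_apply]
  split_ifs
  · exact measurable_const
  · exact h i j

lemma aux_lintegral_pi_le {ι : Type*} [Fintype ι] [DecidableEq ι] (μ : ι → Measure ℝ)
    [∀ i, IsProbabilityMeasure (μ i)] (f : (ι → ℝ) → ℝ≥0∞) (hf : Measurable f) (i : ι) (C : ℝ≥0∞)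
    (h : ∀ x, ∫⁻ y, f (Function.update x i y) ∂μ i ≤ C) : ∫⁻ x, f x ∂Measure.pi μ ≤ C := by
  rw [lintegral_eq_lmarginal_univ (μ := μ) (fun _ => 0), lmarginal_erase' _ hf (Finset.mem_univ i)]
  refine le_trans (lmarginal_mono (g := fun _ => C) h _) ?_
  simp [lmarginal]

/-- The matrix `A` itself, or `A` with column `k` replaced by `b`. -/
noncomputable def auxMat {n : ℕ} (k : Fin n) (q : Fin n × Fin n) (A : Matrix (Fin n) (Fin n) ℝ)
    (b : Fin n → ℝ) : Matrix (Fin n) (Fin n) ℝ :=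
  if k = q.2 then A else A.updateCol k b

noncomputable def auxTerm {n : ℕ} (k : Fin n) (q : Fin n × Fin n) (A : Matrix (Fin n) (Fin n) ℝ)
    (b : Fin n → ℝ) : ℝ :=
  |A q.1 q.2 * (auxMat k q A b)⁻¹ q.2 q.1|

lemma aux_entry_meas {n : ℕ} (i j : Fin n) :
    Measurable fun A : Matrix (Fin n) (Fin n) ℝ => A i j := by
  have : Measurable fun A : Fin n → Fin n → ℝ => A i j := by fun_prop
  exact this

lemma auxTerm_meas {n : ℕ} (k : Fin n) (q : Fin n × Fin n) :
    Measurable fun p : Matrix (Fin n) (Fin n) ℝ × (Fin n → ℝ) => auxTerm k q p.1 p.2 := by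
  have hA : ∀ i j, Measurable fun p : Matrix (Fin n) (Fin n) ℝ × (Fin n → ℝ) => p.1 i j :=
    fun i j => (aux_entry_meas i j).comp measurable_fst
  unfold auxTerm
  refine Measurable.abs ((hA _ _).mul (aux_meas_inv _ (fun i j => ?_) _ _))
  unfold auxMat
  split_ifs
  · exact hA i j
  · simp only [Matrix.updateCol_apply]
    split_ifs
    · fun_prop
    · exact hA i j

/-- The sparse matrix built from its entries. -/
noncomputable def auxG {n : ℕ} (S : Finset (Fin n × Fin n)) (g : S → ℝ) :
    Matrix (Fin n) (Fin n) ℝ :=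
  Matrix.of fun i j => if h : (i, j) ∈ S then g ⟨(i, j), h⟩ else 0

lemma auxG_meas {n : ℕ} (S : Finset (Fin n × Fin n)) : Measurable (auxG S) := by
  have : Measurable fun (g : S → ℝ) (i j : Fin n) =>
      if h : (i, j) ∈ S then g ⟨(i, j), h⟩ else 0 := by
    refine measurable_pi_lambda _ fun i => measurable_pi_lambda _ fun j => ?_
    split_ifs <;> fun_prop
  exact this

lemma auxMat_update {n : ℕ} (S : Finset (Fin n × Fin n)) (q : Fin n × Fin n) (hq : q ∈ S)
    (k : Fin n) (g : S → ℝ) (b : Fin n → ℝ) (y : ℝ) :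
    auxMat k q (auxG S (Function.update g ⟨q, hq⟩ y)) b =
      (auxMat k q (auxG S g) b).updateRow q.1
        (auxMat k q (auxG S (Function.update g ⟨q, hq⟩ 0)) b q.1 + y • Pi.single q.2 1) := by
  obtain ⟨i0, j0⟩ := q
  ext i j
  by_cases hi : i = i0
  · subst hi
    rw [Matrix.updateRow_self]
    by_cases hj : j = j0
    · subst hj
      by_cases hk : k = j
      · subst hk; simp [auxMat, auxG, hq]
      · simp [auxMat, auxG, hk, hq, Matrix.updateCol_apply, Ne.symm hk]
    · simp [auxMat, auxG, hj, Matrix.updateCol_apply, Function.update_apply]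
      split_ifs <;> simp [auxG, hj, Function.update_apply, Matrix.updateCol_apply]
  · rw [Matrix.updateRow_ne hi]
    simp only [auxMat]
    split_ifs <;> simp [auxG, hi, Function.update_apply, Matrix.updateCol_apply]

lemma aux_term_form {n : ℕ} (M : Matrix (Fin n) (Fin n) ℝ) (i j : Fin n) (r : Fin n → ℝ) :
    (∀ y : ℝ, |y * (M.updateRow i (r + y • Pi.single j 1))⁻¹ j i| = 0) ∨
    ∃ q : ℝ, ∀ y : ℝ, |y * (M.updateRow i (r + y • Pi.single j 1))⁻¹ j i| = |y / (y - q)| := by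
  set P := (M.updateRow i (Pi.single j 1)).det with hP
  set Q := (M.updateRow i r).det with hQ
  have key : ∀ y : ℝ, y * (M.updateRow i (r + y • Pi.single j 1))⁻¹ j i = y * ((Q + y * P)⁻¹ * P) := by
    intro y
    rw [Matrix.inv_def, Matrix.smul_apply, Matrix.adjugate_apply, Matrix.updateRow_idem,
      Matrix.det_updateRow_add, Matrix.det_updateRow_smul, Ring.inverse_eq_inv', smul_eq_mul]
  rcases eq_or_ne P 0 with h0 | h0
  · left; intro y; rw [key, h0]; simp
  · right
    refine ⟨-Q / P, fun y => ?_⟩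
    rw [key]
    congr 1
    have : Q + y * P = P * (y - -Q / P) := by field_simp; ring
    rw [this, mul_inv]
    field_simp

lemma aux_sparse_eq {n : ℕ} (S : Finset (Fin n × Fin n)) (Abar : Matrix (Fin n) (Fin n) ℝ)
    (σ : ℝ) (v : NNReal) (hv : (v : ℝ) = σ ^ 2) :
    sparseGaussian S Abar σ =
      (Measure.pi fun p : S => gaussianReal (Abar p.1.1 p.1.2) v).map (auxG S) := by
  have h : v = (⟨σ ^ 2, sq_nonneg σ⟩ : NNReal) := NNReal.eq hv
  subst h
  rfl

lemma aux_vec_eq {n : ℕ} (bbar : Fin n → ℝ) (σ : ℝ) (v : NNReal) (hv : (v : ℝ) = σ ^ 2) :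
    vecGaussian bbar σ = Measure.pi fun i => gaussianReal (bbar i) v := by
  have h : v = (⟨σ ^ 2, sq_nonneg σ⟩ : NNReal) := NNReal.eq hv
  subst h
  rfl

lemma aux_sparse_prob {n : ℕ} (S : Finset (Fin n × Fin n)) (Abar : Matrix (Fin n) (Fin n) ℝ)
    (σ : ℝ) : IsProbabilityMeasure (sparseGaussian S Abar σ) := by
  rw [aux_sparse_eq S Abar σ (Real.toNNReal (σ ^ 2)) (Real.coe_toNNReal _ (sq_nonneg σ))]
  exact Measure.isProbabilityMeasure_map (auxG_meas S).aemeasurable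

lemma aux_vec_prob {n : ℕ} (bbar : Fin n → ℝ) (σ : ℝ) :
    IsProbabilityMeasure (vecGaussian bbar σ) := by
  rw [aux_vec_eq bbar σ (Real.toNNReal (σ ^ 2)) (Real.coe_toNNReal _ (sq_nonneg σ))]
  infer_instance

lemma auxTerm_lintegral {n : ℕ} (S : Finset (Fin n × Fin n))
    (Abar : Matrix (Fin n) (Fin n) ℝ)
    (hmax : ∀ i j, |Abar i j| ≤ 1) (bbar : Fin n → ℝ)
    (σ : ℝ) (hσ : 0 < σ) (k : Fin n) (q : Fin n × Fin n) (hq : q ∈ S) :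
    ∫⁻ p, ENNReal.ofReal (auxTerm k q p.1 p.2 ^ (2 / 3 : ℝ))
        ∂((sparseGaussian S Abar σ).prod (vecGaussian bbar σ))
      ≤ ENNReal.ofReal (23 / 15 * (3 * ((1 + σ) / σ)) ^ (2 / 3 : ℝ)) := by
  have hm : Measurable fun p : Matrix (Fin n) (Fin n) ℝ × (Fin n → ℝ) =>
      ENNReal.ofReal (auxTerm k q p.1 p.2 ^ (2 / 3 : ℝ)) :=
    ENNReal.measurable_ofReal.comp ((auxTerm_meas k q).pow_const _)
  obtain ⟨v, hvσ⟩ : ∃ v : NNReal, (v : ℝ) = σ ^ 2 :=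
    ⟨Real.toNNReal (σ ^ 2), Real.coe_toNNReal _ (sq_nonneg σ)⟩
  have := aux_sparse_prob S Abar σ
  have := aux_vec_prob bbar σ
  rw [lintegral_prod_symm' _ hm]
  calc _ ≤ ∫⁻ b, ENNReal.ofReal (23 / 15 * (3 * ((1 + σ) / σ)) ^ (2 / 3 : ℝ))
        ∂(vecGaussian bbar σ) := ?_
    _ = _ := by simp
  refine lintegral_mono fun b => ?_
  have hmb : Measurable fun A : Matrix (Fin n) (Fin n) ℝ =>
      ENNReal.ofReal (auxTerm k q A b ^ (2 / 3 : ℝ)) := hm.comp measurable_prodMk_right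
  change ∫⁻ A, ENNReal.ofReal (auxTerm k q A b ^ (2 / 3 : ℝ)) ∂_ ≤ _
  rw [aux_sparse_eq S Abar σ v hvσ, lintegral_map hmb (auxG_meas S)]
  refine aux_lintegral_pi_le _ (fun g => ENNReal.ofReal (auxTerm k q (auxG S g) b ^ (2 / 3 : ℝ)))
    (hmb.comp (auxG_meas S)) ⟨q, hq⟩ _ fun g => ?_
  have he : ∀ y, auxTerm k q (auxG S (Function.update g ⟨q, hq⟩ y)) b =
      |y * ((auxMat k q (auxG S g) b).updateRow q.1
        (auxMat k q (auxG S (Function.update g ⟨q, hq⟩ 0)) b q.1 + y • Pi.single q.2 1))⁻¹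
          q.2 q.1| := by
    intro y
    rw [auxTerm, auxMat_update]
    congr 2
    simp [auxG, hq]
  simp only [he]
  rcases aux_term_form (auxMat k q (auxG S g) b) q.1 q.2
    (auxMat k q (auxG S (Function.update g ⟨q, hq⟩ 0)) b q.1) with h | ⟨c, h⟩
  · simp only [h]
    rw [Real.zero_rpow (by norm_num)]
    simp
  · simp only [h]
    exact aux_moment v _ σ c hvσ (hmax _ _) hσ

lemma aux_cwDist_le {ι : Type*} (u v : ι → ℝ) (η : ℝ) (hη : 0 ≤ η)
    (h : cwDist u v ≤ ENNReal.ofReal η) (i : ι) : |u i - v i| ≤ η * |v i| := by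
  have h1 := le_trans (le_iSup (fun i => if v i ≠ 0 then ENNReal.ofReal (|u i - v i| / |v i|)
       else if u i = v i then 0 else ⊤) i) h
  split_ifs at h1 with h2 h3
  · have h4 : 0 < |v i| := abs_pos.2 h2
    rw [ENNReal.ofReal_le_ofReal_iff hη, div_le_iff₀ h4] at h1
    exact h1
  · rw [h3]; simp; positivity
  · simp at h1

lemma aux_cLin_dichotomy {n : ℕ} (k : Fin n) (A : Matrix (Fin n) (Fin n) ℝ) (b : Fin n → ℝ)
    (h0 : (A⁻¹.mulVec b) k = 0) : cLin k A b = 0 ∨ cLin k A b = ⊤ := by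
  unfold cLin cwCond
  set D : Set ((Fin n × Fin n) ⊕ Fin n → ℝ) := {x | IsUnit (funToMat' x).det} with hD
  set F : ((Fin n × Fin n) ⊕ Fin n → ℝ) → Unit → ℝ :=
    fun x (_ : Unit) => (Matrix.mulVec (funToMat' x)⁻¹ (funToVec x)) k with hF
  set a := pairToFun A b with ha
  have hFa : ∀ i, F a i = 0 := fun _ => h0
  by_cases h : ∀ δ : ℝ≥0∞, 0 < δ → δ ≠ ⊤ → ∃ x ∈ D, (cwDist x a ≤ δ ∧ x ≠ a) ∧ F x () ≠ 0
  · right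
    refine iInf₂_eq_top.2 fun δ hδ => ?_
    obtain ⟨x, hxD, ⟨hx1, hx2⟩, hx3⟩ := h (min δ 1) (lt_min hδ one_pos)
      (ne_top_of_le_ne_top ENNReal.one_ne_top (min_le_right _ _))
    refine top_unique ?_
    have h1 : cwDist (F x) (F a) / cwDist x a = ⊤ := by
      have : cwDist (F x) (F a) = ⊤ := by
        refine top_unique (le_trans ?_ (le_iSup _ ()))
        simp [hFa, hx3]
      rw [this, ENNReal.top_div_of_ne_top]
      exact ne_top_of_le_ne_top ENNReal.one_ne_top (hx1.trans (min_le_right _ _))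
    rw [← h1]
    exact le_iSup₂ (f := fun x (_ : x ∈ {x ∈ D | cwDist x a ≤ δ ∧ x ≠ a}) =>
      cwDist (F x) (F a) / cwDist x a) x ⟨hxD, hx1.trans (min_le_left _ _), hx2⟩
  · left
    push Not at h
    obtain ⟨δ, hδ, -, hall⟩ := h
    refine le_antisymm (iInf₂_le_of_le δ hδ (iSup₂_le fun x hx => ?_)) bot_le
    have h1 := hall x hx.1 hx.2
    have : cwDist (F x) (F a) = 0 := by
      refine le_antisymm (iSup_le fun i => ?_) bot_le
      have : F x i = 0 := h1
      simp [hFa, this]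
    rw [this]; simp

lemma aux_continuousAt {n : ℕ} (p : (Fin n × Fin n) ⊕ Fin n → ℝ) (j : Fin n)
    (hp : IsUnit (funToMat' p).det) :
    ContinuousAt (fun x => (Matrix.mulVec (funToMat' x)⁻¹ (funToVec x)) j) p := by
  have hM : Continuous (funToMat' (n := n)) := by
    unfold funToMat'
    refine continuous_matrix fun i j => ?_
    exact continuous_apply _
  have hV : Continuous (funToVec (n := n)) := by
    unfold funToVec
    fun_prop
  have : (fun x => (Matrix.mulVec (funToMat' (n := n) x)⁻¹ (funToVec x)) j) =
      fun x => ((funToMat' x).det)⁻¹ * (Matrix.mulVec (funToMat' x).adjugate (funToVec x)) j := by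
    ext x
    rw [Matrix.inv_def, Matrix.smul_mulVec, Ring.inverse_eq_inv', Pi.smul_apply, smul_eq_mul]
  rw [this]
  refine ContinuousAt.mul (ContinuousAt.inv₀ hM.matrix_det.continuousAt hp.ne_zero) ?_
  exact ((continuous_apply j).comp (hM.matrix_adjugate.matrix_mulVec hV)).continuousAt

lemma aux_perturb {n : ℕ} (k : Fin n) (A A' : Matrix (Fin n) (Fin n) ℝ) (b b' : Fin n → ℝ)
    (hA : IsUnit A.det) (hA' : IsUnit A'.det) (η : ℝ) (hη : 0 ≤ η)
    (h1 : ∀ i j, |A' i j - A i j| ≤ η * |A i j|) (h2 : ∀ i, |b' i - b i| ≤ η * |b i|) :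
    |(A'⁻¹.mulVec b') k - (A⁻¹.mulVec b) k| ≤
      η * ∑ i, ∑ j, |A⁻¹ k i * A i j| * (|(A⁻¹.mulVec b) j| + |(A'⁻¹.mulVec b') j|) := by
  set x := A⁻¹.mulVec b with hx
  set x' := A'⁻¹.mulVec b' with hx'
  have e1 : A.mulVec x = b := by rw [hx, Matrix.mulVec_mulVec, A.mul_nonsing_inv hA, Matrix.one_mulVec]
  have e2 : A'.mulVec x' = b' := by
    rw [hx', Matrix.mulVec_mulVec, A'.mul_nonsing_inv hA', Matrix.one_mulVec]
  have e3 : x' - x = A⁻¹.mulVec ((b' - b) - (A' - A).mulVec x') := by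
    rw [Matrix.sub_mulVec, e2]
    have : b' - b - (b' - A.mulVec x') = A.mulVec (x' - x) := by
      rw [Matrix.mulVec_sub, e1]; abel
    rw [this, Matrix.mulVec_mulVec, A.nonsing_inv_mul hA, Matrix.one_mulVec]
  have e4 : x' k - x k = ∑ i, A⁻¹ k i * ((b' i - b i) - ∑ j, (A' i j - A i j) * x' j) := by
    have := congrFun e3 k
    simpa [Matrix.mulVec, dotProduct] using this
  rw [e4, Finset.mul_sum]
  refine (Finset.abs_sum_le_sum_abs _ _).trans (Finset.sum_le_sum fun i _ => ?_)
  have hb : |b i| ≤ ∑ j, |A i j| * |x j| := by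
    have : b i = ∑ j, A i j * x j := by rw [← congrFun e1 i]; rfl
    rw [this]
    refine (Finset.abs_sum_le_sum_abs _ _).trans (Finset.sum_le_sum fun j _ => ?_)
    rw [abs_mul]
  have hs : |∑ j, (A' i j - A i j) * x' j| ≤ ∑ j, η * |A i j| * |x' j| := by
    refine (Finset.abs_sum_le_sum_abs _ _).trans (Finset.sum_le_sum fun j _ => ?_)
    rw [abs_mul]; gcongr; exact h1 i j
  calc |A⁻¹ k i * ((b' i - b i) - ∑ j, (A' i j - A i j) * x' j)|
      = |A⁻¹ k i| * |(b' i - b i) - ∑ j, (A' i j - A i j) * x' j| := abs_mul _ _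
    _ ≤ |A⁻¹ k i| * (η * (∑ j, |A i j| * |x j|) + ∑ j, η * |A i j| * |x' j|) := by
        gcongr
        refine (abs_sub _ _).trans (add_le_add ((h2 i).trans ?_) hs)
        gcongr
    _ = _ := by
        rw [Finset.mul_sum, ← Finset.sum_add_distrib, Finset.mul_sum, Finset.mul_sum]
        refine Finset.sum_congr rfl fun j _ => ?_
        rw [abs_mul]; ring

lemma aux_cLin_le {n : ℕ} (k : Fin n) (A : Matrix (Fin n) (Fin n) ℝ) (b : Fin n → ℝ)
    (hA : IsUnit A.det) (hk : (A⁻¹.mulVec b) k ≠ 0) :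
    cLin k A b ≤ ENNReal.ofReal
      (2 * ∑ i, ∑ j, |A⁻¹ k i * A i j| * |(A⁻¹.mulVec b) j| / |(A⁻¹.mulVec b) k|) := by
  have hk' : 0 < |(A⁻¹.mulVec b) k| := abs_pos.2 hk
  set p0 := pairToFun A b with hp0
  have hA0 : funToMat' p0 = A := by ext i j; rfl
  have hb0 : funToVec p0 = b := by ext i; rfl
  set X : ((Fin n × Fin n) ⊕ Fin n → ℝ) → Fin n → ℝ :=
    fun x => Matrix.mulVec (funToMat' x)⁻¹ (funToVec x) with hX
  have hX0 : X p0 = A⁻¹.mulVec b := by simp only [hX, hA0, hb0]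
  set L := 2 * ∑ i, ∑ j, |A⁻¹ k i * A i j| * |(A⁻¹.mulVec b) j| / |(A⁻¹.mulVec b) k| with hL
  have hL0 : 0 ≤ L := by
    refine mul_nonneg (by norm_num) (Finset.sum_nonneg fun i _ => Finset.sum_nonneg fun j _ => ?_)
    exact div_nonneg (mul_nonneg (abs_nonneg _) (abs_nonneg _)) (abs_nonneg _)
  set Lp : ((Fin n × Fin n) ⊕ Fin n → ℝ) → ℝ := fun p =>
    (∑ i, ∑ j, |A⁻¹ k i * A i j| * (|(A⁻¹.mulVec b) j| + |X p j|)) / |(A⁻¹.mulVec b) k| with hLp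
  have hLp0 : Lp p0 = L := by
    simp only [hLp, hL, hX0, Finset.sum_div, Finset.mul_sum]
    refine Finset.sum_congr rfl fun i _ => Finset.sum_congr rfl fun j _ => ?_
    ring
  have hcont : ContinuousAt Lp p0 := by
    refine ContinuousAt.div_const ?_ _
    refine tendsto_finsetSum _ fun i _ => tendsto_finsetSum _ fun j _ => ?_
    refine Filter.Tendsto.const_mul _ (Filter.Tendsto.const_add _ ?_)
    exact (aux_continuousAt p0 j (by rwa [hA0])).abs
  refine ENNReal.le_of_forall_pos_le_add fun ε hε _ => ?_
  have hε' : (0 : ℝ) < ε := hε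
  have hev : ∀ᶠ p in nhds p0, Lp p < L + ε :=
    hcont.eventually (gt_mem_nhds (by rw [hLp0]; linarith))
  obtain ⟨r, hr, hball⟩ := Metric.eventually_nhds_iff.1 hev
  set δ : ℝ := r / (‖p0‖ + 1) / 2 with hδ
  have hδ0 : 0 < δ := by positivity
  refine iInf₂_le_of_le (ENNReal.ofReal δ) (ENNReal.ofReal_pos.2 hδ0) (iSup₂_le fun p hp => ?_)
  obtain ⟨hpD, hpd, -⟩ := hp
  change cwDist _ _ / cwDist p p0 ≤ _
  change cwDist p p0 ≤ _ at hpd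
  have hfin : cwDist p p0 ≠ ⊤ := ne_top_of_le_ne_top ENNReal.ofReal_ne_top hpd
  set η := (cwDist p p0).toReal with hη
  have hη0 : 0 ≤ η := ENNReal.toReal_nonneg
  have hηe : cwDist p p0 = ENNReal.ofReal η := (ENNReal.ofReal_toReal hfin).symm
  have hcomp := aux_cwDist_le p p0 η hη0 hηe.le
  have hcompδ := aux_cwDist_le p p0 δ hδ0.le hpd
  have hclose : dist p p0 < r := by
    rw [dist_pi_lt_iff hr]
    intro i
    rw [Real.dist_eq]
    have h1 : |p0 i| ≤ ‖p0‖ := norm_le_pi_norm p0 i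
    have h2 : δ * (‖p0‖ + 1) = r / 2 := by rw [hδ]; field_simp
    nlinarith [hcompδ i]
  have hlt := hball hclose
  have hper := aux_perturb k A (funToMat' p) b (funToVec p) hA hpD η hη0
    (fun i j => hcomp (Sum.inl (i, j))) (fun i => hcomp (Sum.inr i))
  have hmain : |X p k - (A⁻¹.mulVec b) k| / |(A⁻¹.mulVec b) k| ≤ (L + ε) * η := by
    have : |X p k - (A⁻¹.mulVec b) k| / |(A⁻¹.mulVec b) k| ≤ η * Lp p := by
      rw [hLp, ← mul_div_assoc]
      exact div_le_div_of_nonneg_right hper hk'.le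
    nlinarith
  refine ENNReal.div_le_of_le_mul ?_
  rw [hηe, ← ENNReal.ofReal_coe_nnreal, ← ENNReal.ofReal_add hL0 hε'.le,
    ← ENNReal.ofReal_mul (add_nonneg hL0 hε'.le)]
  refine iSup_le fun u => ?_
  have hF0 : (Matrix.mulVec (funToMat' p0)⁻¹ (funToVec p0)) k = (A⁻¹.mulVec b) k := congrFun hX0 k
  have hF0' : (Matrix.mulVec (funToMat' (pairToFun A b))⁻¹ (funToVec (pairToFun A b))) k
    = (A⁻¹.mulVec b) k := hF0
  simp only [hF0']
  rw [if_pos hk]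
  exact ENNReal.ofReal_le_ofReal hmain

lemma aux_inv_identity {n : ℕ} (k j i : Fin n) (hjk : j ≠ k) (A : Matrix (Fin n) (Fin n) ℝ)
    (b : Fin n → ℝ) (hA : IsUnit A.det) (hk : (A⁻¹.mulVec b) k ≠ 0) :
    (A.updateCol k b)⁻¹ j i =
      A⁻¹ j i - (A⁻¹.mulVec b) j / (A⁻¹.mulVec b) k * A⁻¹ k i := by
  set x := A⁻¹.mulVec b with hx
  set B := A.updateCol k b with hB
  have hdet : IsUnit B.det := by
    have h := congrFun (Matrix.det_smul_inv_mulVec_eq_cramer A b hA) k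
    rw [Matrix.cramer_apply] at h
    rw [hB, ← h]
    simp only [Pi.smul_apply, smul_eq_mul]
    exact isUnit_iff_ne_zero.2 (mul_ne_zero hA.ne_zero hk)
  set y : Fin n → ℝ := fun i => A⁻¹ j i - x j / x k * A⁻¹ k i with hy
  have hinv : ∀ a l, ∑ i, A⁻¹ a i * A i l = if a = l then 1 else 0 := by
    intro a l
    have := congrFun (congrFun (A.nonsing_inv_mul hA) a) l
    rw [Matrix.mul_apply, Matrix.one_apply] at this
    exact this
  have hyB : Matrix.vecMul y B = Pi.single j 1 := by
    ext l
    simp only [Matrix.vecMul, dotProduct, hy, sub_mul, Finset.sum_sub_distrib, mul_assoc,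
      ← Finset.mul_sum]
    by_cases hl : l = k
    · subst hl
      have : ∀ i, B i l = b i := fun i => by simp [hB]
      simp only [this]
      have hxa : ∀ a, ∑ i, A⁻¹ a i * b i = x a := fun a => rfl
      rw [hxa, hxa, div_mul_cancel₀ _ hk]
      simp [Pi.single_apply, Ne.symm hjk]
    · have : ∀ i, B i l = A i l := fun i => by simp [hB, hl]
      simp only [this]
      rw [hinv, hinv, Pi.single_apply]
      simp [Ne.symm hl, eq_comm]
  have h3 : y = Matrix.vecMul (Pi.single j 1) B⁻¹ := by
    rw [← hyB, Matrix.vecMul_vecMul, B.mul_nonsing_inv hdet, Matrix.vecMul_one]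
  have h4 := congrFun h3 i
  rw [Matrix.single_one_vecMul] at h4
  exact h4.symm

lemma aux_cLin_le_sum {n : ℕ} (S : Finset (Fin n × Fin n)) (k : Fin n)
    (A : Matrix (Fin n) (Fin n) ℝ) (b : Fin n → ℝ) (hS : ∀ i j, (i, j) ∉ S → A i j = 0)
    (hk : (A⁻¹.mulVec b) k ≠ 0) :
    cLin k A b ≤ ENNReal.ofReal (2 * ∑ q ∈ S, ∑ l, auxTerm l q A b) := by
  have hA : IsUnit A.det := by
    by_contra h
    rw [Matrix.nonsing_inv_apply_not_isUnit A h] at hk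
    simp at hk
  refine (aux_cLin_le k A b hA hk).trans (ENNReal.ofReal_le_ofReal ?_)
  have hk' : 0 < |(A⁻¹.mulVec b) k| := abs_pos.2 hk
  rw [← Fintype.sum_prod_type' (f := fun i j =>
    |A⁻¹ k i * A i j| * |(A⁻¹.mulVec b) j| / |(A⁻¹.mulVec b) k|)]
  rw [← Finset.sum_subset (Finset.subset_univ S)]
  swap
  · rintro ⟨i, j⟩ - hij
    simp [hS i j hij]
  gcongr with q hq
  obtain ⟨i, j⟩ := q
  have hnn : ∀ l, 0 ≤ auxTerm l (i, j) A b := fun l => abs_nonneg _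
  by_cases hjk : j = k
  · subst hjk
    simp only
    rw [mul_div_assoc, div_self hk'.ne', mul_one]
    have : |A⁻¹ j i * A i j| = auxTerm j (i, j) A b := by
      simp [auxTerm, auxMat, mul_comm]
    rw [this]
    exact Finset.single_le_sum (f := fun l => auxTerm l (i, j) A b) (fun l _ => hnn l)
      (Finset.mem_univ j)
  · have h1 : auxTerm j (i, j) A b + auxTerm k (i, j) A b ≤ ∑ l, auxTerm l (i, j) A b := by
      rw [← Finset.sum_pair hjk (f := fun l => auxTerm l (i, j) A b)]
      exact Finset.sum_le_sum_of_subset_of_nonneg (Finset.subset_univ _) fun l _ _ => hnn l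
    refine le_trans ?_ h1
    have hid := aux_inv_identity k j i hjk A b hA hk
    have e1 : auxTerm j (i, j) A b = |A i j * A⁻¹ j i| := by simp [auxTerm, auxMat]
    have e2 : auxTerm k (i, j) A b = |A i j * (A.updateCol k b)⁻¹ j i| := by
      simp [auxTerm, auxMat, Ne.symm hjk]
    rw [e1, e2, ← abs_mul, ← abs_div]
    have : A⁻¹ k i * A i j * (A⁻¹.mulVec b) j / (A⁻¹.mulVec b) k =
        A i j * A⁻¹ j i - A i j * (A.updateCol k b)⁻¹ j i := by
      rw [hid]; ring
    rw [this]
    exact abs_sub _ _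

lemma aux_rpow_sum_le {ι : Type*} (s : Finset ι) (f : ι → ℝ) (hf : ∀ i, 0 ≤ f i) :
    (∑ i ∈ s, f i) ^ (2 / 3 : ℝ) ≤ ∑ i ∈ s, f i ^ (2 / 3 : ℝ) := by
  classical
  induction s using Finset.induction_on with
  | empty => simp
  | insert a s ha ih =>
    rw [Finset.sum_insert ha, Finset.sum_insert ha]
    refine (Real.rpow_add_le_add_rpow (hf a) (Finset.sum_nonneg fun i _ => hf i)
      (by norm_num) (by norm_num)).trans ?_
    gcongr

lemma aux_card_le {n : ℕ} (S : Finset (Fin n × Fin n)) (hS : Admissible S) : n ≤ S.card := by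
  obtain ⟨B, hB, hdet⟩ := hS
  have h : ∀ i, i ∈ S.image Prod.fst := by
    intro i
    by_contra hi
    refine hdet.ne_zero (Matrix.det_eq_zero_of_row_eq_zero i fun j => hB i j fun hij => hi ?_)
    exact Finset.mem_image.2 ⟨(i, j), hij, rfl⟩
  calc n = (Finset.univ : Finset (Fin n)).card := by simp
    _ ≤ (S.image Prod.fst).card := Finset.card_le_card fun i _ => h i
    _ ≤ S.card := Finset.card_image_le

/-- The dominating random variable. -/
noncomputable def auxY {n : ℕ} (S : Finset (Fin n × Fin n))
    (p : Matrix (Fin n) (Fin n) ℝ × (Fin n → ℝ)) : ℝ :=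
  2 ^ (2 / 3 : ℝ) * ∑ q ∈ S, ∑ l, auxTerm l q p.1 p.2 ^ (2 / 3 : ℝ)

lemma auxTerm_nonneg {n : ℕ} (k : Fin n) (q : Fin n × Fin n) (A : Matrix (Fin n) (Fin n) ℝ)
    (b : Fin n → ℝ) : 0 ≤ auxTerm k q A b := abs_nonneg _

lemma auxY_nonneg {n : ℕ} (S : Finset (Fin n × Fin n))
    (p : Matrix (Fin n) (Fin n) ℝ × (Fin n → ℝ)) : 0 ≤ auxY S p :=
  mul_nonneg (by positivity) (Finset.sum_nonneg fun q _ => Finset.sum_nonneg fun l _ =>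
    Real.rpow_nonneg (auxTerm_nonneg _ _ _ _) _)

lemma auxY_meas {n : ℕ} (S : Finset (Fin n × Fin n)) : Measurable (auxY S) := by
  unfold auxY
  refine Measurable.const_mul ?_ _
  exact Finset.measurable_fun_sum _ fun q _ => Finset.measurable_fun_sum _ fun l _ =>
    (auxTerm_meas l q).pow_const _

lemma auxY_lintegral {n : ℕ} (S : Finset (Fin n × Fin n))
    (Abar : Matrix (Fin n) (Fin n) ℝ)
    (hmax : ∀ i j, |Abar i j| ≤ 1) (bbar : Fin n → ℝ)
    (σ : ℝ) (hσ : 0 < σ) :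
    ∫⁻ p, ENNReal.ofReal (auxY S p)
        ∂((sparseGaussian S Abar σ).prod (vecGaussian bbar σ))
      ≤ ENNReal.ofReal (S.card * n * (23 / 15 * (6 * ((1 + σ) / σ)) ^ (2 / 3 : ℝ))) := by
  have hκ : 0 < (1 + σ) / σ := by positivity
  have h1 : ∀ p, ENNReal.ofReal (auxY S p) = ENNReal.ofReal (2 ^ (2 / 3 : ℝ)) *
      ∑ q ∈ S, ∑ l, ENNReal.ofReal (auxTerm l q p.1 p.2 ^ (2 / 3 : ℝ)) := by
    intro p
    have hnn : ∀ q l, 0 ≤ auxTerm l q p.1 p.2 ^ (2 / 3 : ℝ) := fun q l =>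
      Real.rpow_nonneg (auxTerm_nonneg _ _ _ _) _
    rw [auxY, ENNReal.ofReal_mul (by positivity),
      ENNReal.ofReal_sum_of_nonneg fun q _ => Finset.sum_nonneg fun l _ => hnn q l]
    congr 1
    exact Finset.sum_congr rfl fun q _ => ENNReal.ofReal_sum_of_nonneg fun l _ => hnn q l
  have hm : ∀ (l : Fin n) (q : Fin n × Fin n),
      Measurable fun p : Matrix (Fin n) (Fin n) ℝ × (Fin n → ℝ) =>
      ENNReal.ofReal (auxTerm l q p.1 p.2 ^ (2 / 3 : ℝ)) := fun l q =>
    ENNReal.measurable_ofReal.comp ((auxTerm_meas l q).pow_const _)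
  simp only [h1]
  rw [lintegral_const_mul _ (Finset.measurable_fun_sum _ fun q _ =>
      Finset.measurable_fun_sum _ fun l _ => hm l q),
    lintegral_finsetSum _ fun q _ => Finset.measurable_fun_sum _ fun l _ => hm l q]
  have h2 : ∀ q ∈ S, ∫⁻ p, ∑ l, ENNReal.ofReal (auxTerm l q p.1 p.2 ^ (2 / 3 : ℝ))
        ∂((sparseGaussian S Abar σ).prod (vecGaussian bbar σ)) ≤
      n * ENNReal.ofReal (23 / 15 * (3 * ((1 + σ) / σ)) ^ (2 / 3 : ℝ)) := by
    intro q hq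
    rw [lintegral_finsetSum _ fun l _ => hm l q]
    refine (Finset.sum_le_sum fun l _ =>
      auxTerm_lintegral S Abar hmax bbar σ hσ l q hq).trans ?_
    simp
  calc _ ≤ ENNReal.ofReal (2 ^ (2 / 3 : ℝ)) * ∑ q ∈ S,
        n * ENNReal.ofReal (23 / 15 * (3 * ((1 + σ) / σ)) ^ (2 / 3 : ℝ)) := by
        gcongr with q hq
        exact h2 q hq
    _ = _ := by
        rw [Finset.sum_const, nsmul_eq_mul, ← ENNReal.ofReal_natCast n,
          ← ENNReal.ofReal_natCast S.card, ← ENNReal.ofReal_mul (by positivity),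
          ← ENNReal.ofReal_mul (by positivity), ← ENNReal.ofReal_mul (by positivity)]
        congr 1
        have : 6 * ((1 + σ) / σ) = 2 * (3 * ((1 + σ) / σ)) := by ring
        have e : (6 * ((1 + σ) / σ)) ^ (2 / 3 : ℝ) =
            2 ^ (2 / 3 : ℝ) * (3 * ((1 + σ) / σ)) ^ (2 / 3 : ℝ) := by
          rw [this, Real.mul_rpow (by norm_num) (by positivity)]
        rw [e]
        generalize (3 * ((1 + σ) / σ)) ^ (2 / 3 : ℝ) = z
        generalize (2 : ℝ) ^ (2 / 3 : ℝ) = w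
        ring

lemma aux_pointwise {n : ℕ} (S : Finset (Fin n × Fin n))
    (p : Matrix (Fin n) (Fin n) ℝ × (Fin n → ℝ)) (hS : ∀ i j, (i, j) ∉ S → p.1 i j = 0)
    (M : ℝ) (hM0 : 0 < M) (hM : 1 ≤ Real.log M) :
    Real.log (cLinMax p.1 p.2).toReal ≤ 3 / 2 * (auxY S p / M - 1 + Real.log M) := by
  have hY := auxY_nonneg S p
  have hYM : 0 ≤ auxY S p / M := by positivity
  rcases eq_or_ne (cLinMax p.1 p.2).toReal 0 with h0 | h0
  · rw [h0, Real.log_zero]; linarith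
  have htop : cLinMax p.1 p.2 ≠ ⊤ := fun h => h0 (by rw [h]; rfl)
  have hZ0 : 0 ≤ ∑ q ∈ S, ∑ l, auxTerm l q p.1 p.2 :=
    Finset.sum_nonneg fun q _ => Finset.sum_nonneg fun l _ => auxTerm_nonneg _ _ _ _
  have hle : cLinMax p.1 p.2 ≤ ENNReal.ofReal (2 * ∑ q ∈ S, ∑ l, auxTerm l q p.1 p.2) := by
    refine iSup_le fun k => ?_
    by_cases hk : (p.1⁻¹.mulVec p.2) k = 0
    · rcases aux_cLin_dichotomy k p.1 p.2 hk with h | h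
      · rw [h]; exact bot_le
      · exact absurd (top_unique (h ▸ le_iSup (fun k => cLin k p.1 p.2) k)) htop
    · exact aux_cLin_le_sum S k p.1 p.2 hS hk
  have hc : (cLinMax p.1 p.2).toReal ≤ 2 * ∑ q ∈ S, ∑ l, auxTerm l q p.1 p.2 :=
    ENNReal.toReal_le_of_le_ofReal (by positivity) hle
  set c := (cLinMax p.1 p.2).toReal with hcdef
  have hc0 : 0 < c := lt_of_le_of_ne ENNReal.toReal_nonneg (Ne.symm h0)
  have hcY : c ^ (2 / 3 : ℝ) ≤ auxY S p := by
    calc c ^ (2 / 3 : ℝ) ≤ (2 * ∑ q ∈ S, ∑ l, auxTerm l q p.1 p.2) ^ (2 / 3 : ℝ) := by gcongr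
      _ = 2 ^ (2 / 3 : ℝ) * (∑ q ∈ S, ∑ l, auxTerm l q p.1 p.2) ^ (2 / 3 : ℝ) :=
        Real.mul_rpow (by norm_num) hZ0
      _ ≤ _ := by
        unfold auxY
        gcongr
        refine (aux_rpow_sum_le S _ fun q => Finset.sum_nonneg fun l _ =>
          auxTerm_nonneg _ _ _ _).trans ?_
        gcongr with q hq
        exact aux_rpow_sum_le _ _ fun l => auxTerm_nonneg _ _ _ _
  have h1 : Real.log c = 3 / 2 * Real.log (c ^ (2 / 3 : ℝ)) := by
    rw [Real.log_rpow hc0]; ring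
  have hcs : 0 < c ^ (2 / 3 : ℝ) := Real.rpow_pos_of_pos hc0 _
  have h2 : Real.log (c ^ (2 / 3 : ℝ)) = Real.log (c ^ (2 / 3 : ℝ) / M) + Real.log M := by
    rw [Real.log_div hcs.ne' hM0.ne']; ring
  have h3 := Real.log_le_sub_one_of_pos (div_pos hcs hM0)
  have h4 : c ^ (2 / 3 : ℝ) / M ≤ auxY S p / M := by gcongr
  rw [h1, h2]
  linarith

lemma aux_ae_supp {n : ℕ} (S : Finset (Fin n × Fin n)) (Abar : Matrix (Fin n) (Fin n) ℝ)
    (bbar : Fin n → ℝ) (σ : ℝ) :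
    ∀ᵐ p ∂((sparseGaussian S Abar σ).prod (vecGaussian bbar σ)),
      ∀ i j, (i, j) ∉ S → p.1 i j = 0 := by
  have := aux_sparse_prob S Abar σ
  have := aux_vec_prob bbar σ
  have h : ∀ᵐ A ∂(sparseGaussian S Abar σ), ∀ i j, (i, j) ∉ S → A i j = 0 := by
    rw [aux_sparse_eq S Abar σ (Real.toNNReal (σ ^ 2)) (Real.coe_toNNReal _ (sq_nonneg σ))]
    refine ae_all_iff.2 fun i => ae_all_iff.2 fun j => ?_
    by_cases hij : (i, j) ∈ S
    · simp [hij]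
    · simp only [hij, not_false_eq_true, forall_const]
      rw [ae_map_iff (auxG_meas S).aemeasurable
        (measurableSet_eq_fun (aux_entry_meas i j) measurable_const)]
      refine Filter.Eventually.of_forall fun g => ?_
      simp [auxG, hij]
  exact Measure.quasiMeasurePreserving_fst.ae h

lemma aux_numeric : 3 / 2 * Real.log (23 / 15) + Real.log 6 ≤ 2.65 := by
  have h : Real.log ((23 / 15) ^ 3 * 6 ^ 2) ≤ 5.3 := by
    rw [Real.log_le_iff_le_exp (by norm_num)]
    have h1 : Real.exp 5.3 = Real.exp 1 ^ 5 * Real.exp 0.3 := by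
      rw [← Real.exp_nat_mul, ← Real.exp_add]; norm_num
    have h2 : (1.3 : ℝ) ≤ Real.exp 0.3 := by
      have := Real.add_one_le_exp (0.3 : ℝ); linarith
    have h3 : (2.7 : ℝ) ^ 5 ≤ Real.exp 1 ^ 5 := by
      have := Real.exp_one_gt_d9
      gcongr; linarith
    rw [h1]
    calc ((23 / 15) ^ 3 * 6 ^ 2 : ℝ) ≤ 2.7 ^ 5 * 1.3 := by norm_num
      _ ≤ _ := by gcongr
  rw [Real.log_mul (by norm_num) (by norm_num), Real.log_pow, Real.log_pow] at h
  push_cast at h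
  linarith

/-- Let `S ⊆ [n]²` be admissible, `Ā ∈ M_S`, `b̄ ∈ ℝⁿ` with
`‖Ā‖_max ≤ 1`, `‖b̄‖_∞ ≤ 1`, `σ > 0`, `A ~ N_S(Ā, σ²Id)` and `b ~ N(b̄, σ²Id)`
independent. For every `β > 1`,
`E(log_β(c(A,b))) ≤ log_β((1+σ)/σ) + 2·log_β|S| + log_β n + 2.65/ln β`,
where `c(A,b) = max_k c_k(A,b)`. -/
theorem expectation_log_cLinMax_le {n : ℕ} (S : Finset (Fin n × Fin n)) (hS : Admissible S)
    (Abar : Matrix (Fin n) (Fin n) ℝ) (hsupp : ∀ i j, (i, j) ∉ S → Abar i j = 0)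
    (hmax : ∀ i j, |Abar i j| ≤ 1) (bbar : Fin n → ℝ) (hbmax : ∀ i, |bbar i| ≤ 1)
    (σ : ℝ) (hσ : 0 < σ) (β : ℝ) (hβ : 1 < β) :
    ∫ p, Real.log (cLinMax p.1 p.2).toReal / Real.log β
        ∂((sparseGaussian S Abar σ).prod (vecGaussian bbar σ))
      ≤ Real.log ((1 + σ) / σ) / Real.log β + 2 * (Real.log S.card / Real.log β)
          + Real.log n / Real.log β + 2.65 / Real.log β := by
  have hlβ : 0 < Real.log β := Real.log_pos hβ
  have := aux_sparse_prob S Abar σ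
  have := aux_vec_prob bbar σ
  have hκ : 1 < (1 + σ) / σ := by rw [lt_div_iff₀ hσ]; linarith
  have hlκ : 0 ≤ Real.log ((1 + σ) / σ) := Real.log_nonneg hκ.le
  have hlS : 0 ≤ Real.log S.card := Real.log_natCast_nonneg _
  have hln : 0 ≤ Real.log n := Real.log_natCast_nonneg _
  rw [integral_div]
  have hrw : Real.log ((1 + σ) / σ) / Real.log β + 2 * (Real.log S.card / Real.log β)
          + Real.log n / Real.log β + 2.65 / Real.log β =
      (Real.log ((1 + σ) / σ) + 2 * Real.log S.card + Real.log n + 2.65) / Real.log β := by ring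
  rw [hrw]
  refine div_le_div_of_nonneg_right ?_ hlβ.le
  set μ := (sparseGaussian S Abar σ).prod (vecGaussian bbar σ) with hμ
  by_cases hcInt : Integrable (fun p => Real.log (cLinMax p.1 p.2).toReal) μ
  swap
  · rw [integral_undef hcInt]; linarith
  have hR : 0 ≤ Real.log ((1 + σ) / σ) + 2 * Real.log S.card + Real.log n + 2.65 := by
    linarith
  rcases Nat.eq_zero_or_pos n with hn0 | hn
  · subst hn0
    have : ∀ p : Matrix (Fin 0) (Fin 0) ℝ × (Fin 0 → ℝ),
        Real.log (cLinMax p.1 p.2).toReal = 0 := by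
      intro p; simp [cLinMax]
    simp only [this, integral_zero]
    exact hR
  have hcard := aux_card_le S hS
  have hn1 : (1 : ℝ) ≤ n := by exact_mod_cast hn
  have hmn : (n : ℝ) ≤ S.card := by exact_mod_cast hcard
  have hm0 : (0 : ℝ) < S.card := by linarith
  have hn0 : (0 : ℝ) < n := by linarith
  set κ := (1 + σ) / σ with hκd
  have hκ0 : 0 < κ := by linarith
  set M : ℝ := S.card * n * (23 / 15 * (6 * κ) ^ (2 / 3 : ℝ)) with hM
  have hM0 : 0 < M := by positivity
  have hlogM : Real.log M = Real.log S.card + Real.log n +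
      (Real.log (23 / 15) + 2 / 3 * (Real.log 6 + Real.log κ)) := by
    rw [hM, Real.log_mul (by positivity) (by positivity), Real.log_mul hm0.ne' hn0.ne',
      Real.log_mul (by norm_num) (by positivity), Real.log_rpow (by positivity),
      Real.log_mul (by norm_num) hκ0.ne']
  have hl6 : (1.5 : ℝ) ≤ Real.log 6 := by
    rw [Real.le_log_iff_exp_le (by norm_num)]
    have h1 : Real.exp 1.5 ^ 2 = Real.exp 1 ^ 3 := by
      rw [← Real.exp_nat_mul, ← Real.exp_nat_mul]; norm_num
    have h2 : Real.exp 1 ^ 3 ≤ 3 ^ 3 := by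
      have := Real.exp_one_lt_d9
      gcongr; linarith
    nlinarith [Real.exp_pos (1.5 : ℝ)]
  have hl23 : 0 ≤ Real.log (23 / 15) := Real.log_nonneg (by norm_num)
  have hM1 : 1 ≤ Real.log M := by rw [hlogM]; linarith
  have hYl := auxY_lintegral S Abar hmax bbar σ hσ
  have hYint : Integrable (auxY S) μ := by
    refine ⟨(auxY_meas S).aestronglyMeasurable, ?_⟩
    rw [hasFiniteIntegral_iff_ofReal (Filter.Eventually.of_forall fun p => auxY_nonneg S p)]
    exact lt_of_le_of_lt hYl ENNReal.ofReal_lt_top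
  have hYM : ∫ p, auxY S p ∂μ ≤ M := by
    rw [integral_eq_lintegral_of_nonneg_ae (Filter.Eventually.of_forall fun p => auxY_nonneg S p)
      (auxY_meas S).aestronglyMeasurable]
    exact ENNReal.toReal_le_of_le_ofReal hM0.le hYl
  have hgint : Integrable (fun p => 3 / 2 * (auxY S p / M + (Real.log M - 1))) μ :=
    ((hYint.div_const M).add (integrable_const _)).const_mul _
  calc ∫ p, Real.log (cLinMax p.1 p.2).toReal ∂μ
      ≤ ∫ p, 3 / 2 * (auxY S p / M + (Real.log M - 1)) ∂μ := by
        refine integral_mono_ae hcInt hgint ?_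
        filter_upwards [aux_ae_supp S Abar bbar σ] with p hp
        have := aux_pointwise S p hp M hM0 hM1
        linarith
    _ = 3 / 2 * ((∫ p, auxY S p ∂μ) / M + (Real.log M - 1)) := by
        rw [integral_const_mul, integral_add (hYint.div_const M) (integrable_const _),
          integral_div, integral_const]
        simp
    _ ≤ 3 / 2 * (1 + (Real.log M - 1)) := by
        gcongr
        exact (div_le_one hM0).2 hYM
    _ ≤ _ := by
        have hnum := aux_numeric
        have hmono : Real.log n ≤ Real.log S.card := Real.log_le_log hn0 hmn
        rw [hlogM]
        linarith
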